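/- arXiv:1907.10468 — 3 statements merged into one kernel-verified Lean document; each statement's English description precedes it below -/
import Mathlib

section
/- For every integer k ≥ 1, the diagonal game Ĝ₅[k] = ⟨D_k, D_kᵀ⟩ has exactly k Nash equilibria, namely the pure profiles ⟨s, s⟩ for s ∈ [k]; each of these Nash equilibria is symmetric, Pareto-Optimal and Strongly Pareto-Optimal, and yields utility 1 to each player. -/
/-!
If every entry of `M` is at most `c`, then so is every expected utility, and it equals `c` exactly
when `M = c` on the product of the two supports. In the game given by the order matrix of a finite
poset with a least element and its transpose, either player secures the maximal utility `1` against
any opponent by playing `⊥`. So both utilities are `1` in every equilibrium, and any strategies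
`i`, `j` in the respective supports satisfy `i ≤ j` and `j ≤ i`: by antisymmetry both supports are
the same singleton.
-/

open Finset

/-- `x` is a probability distribution on the finite type `α`. -/
def IsDist {α : Type*} [Fintype α] (x : α → ℝ) : Prop :=
  (∀ s, 0 ≤ x s) ∧ ∑ s, x s = 1

/-- Expected utility, in a bimatrix game, of the player whose utility matrix is `M`. -/
noncomputable def pay {α : Type*} [Fintype α] (M : α → α → ℝ) (x y : α → ℝ) : ℝ :=
  ∑ s₁, ∑ s₂, x s₁ * y s₂ * M s₁ s₂

/-- `⟨x, y⟩` is a (mixed) Nash equilibrium of the bimatrix game `⟨R, C⟩`. -/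
def IsNash {α : Type*} [Fintype α] (R C : α → α → ℝ) (x y : α → ℝ) : Prop :=
  IsDist x ∧ IsDist y ∧
    (∀ x', IsDist x' → pay R x' y ≤ pay R x y) ∧
    (∀ y', IsDist y' → pay C x y' ≤ pay C x y)

/-- The Nash equilibrium `⟨x, y⟩` is Pareto-Optimal. -/
def ParetoOpt {α : Type*} [Fintype α] (R C : α → α → ℝ) (x y : α → ℝ) : Prop :=
  ¬ ∃ x' y', IsDist x' ∧ IsDist y' ∧
    (pay R x y < pay R x' y' ∨ pay C x y < pay C x' y') ∧
    pay R x y ≤ pay R x' y' ∧ pay C x y ≤ pay C x' y'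

/-- The Nash equilibrium `⟨x, y⟩` is Strongly Pareto-Optimal. -/
def StrongParetoOpt {α : Type*} [Fintype α] (R C : α → α → ℝ) (x y : α → ℝ) : Prop :=
  ∀ x' y', IsDist x' → IsDist y' →
    (pay R x y < pay R x' y' ∨ pay C x y < pay C x' y') →
    ((x' ≠ x ∧ pay R x' y' ≤ pay R x y) ∨ (y' ≠ y ∧ pay C x' y' ≤ pay C x y))

/-- The mixed strategy putting probability 1 on the single pure strategy `s`. -/
def pureStrat {α : Type*} [DecidableEq α] (s : α) : α → ℝ :=
  fun t => if t = s then 1 else 0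

/-- The upper-diagonal `{0,1}`-matrix `D_k`. -/
def diagD (k : ℕ) : Fin k → Fin k → ℝ := fun i j => if i ≤ j then 1 else 0

/-- The transpose `D_kᵀ`. -/
def diagDT (k : ℕ) : Fin k → Fin k → ℝ := fun i j => diagD k j i

section PureStrat

variable {α : Type*} [DecidableEq α]

lemma pureStrat_eq_single (s : α) : pureStrat s = Pi.single s 1 :=
  funext fun t => (Pi.single_apply s 1 t).symm

lemma pureStrat_ne_zero_iff {s t : α} : pureStrat s t ≠ 0 ↔ t = s := by
  simp [pureStrat]

lemma pureStrat_injective : Function.Injective (pureStrat : α → α → ℝ) := fun _ _ h =>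
  pureStrat_ne_zero_iff.1 (h ▸ pureStrat_ne_zero_iff.2 rfl)

variable [Fintype α]

lemma isDist_pureStrat (s : α) : IsDist (pureStrat s) :=
  pureStrat_eq_single s ▸ single_mem_stdSimplex ℝ s

lemma pay_pureStrat (M : α → α → ℝ) (s t : α) : pay M (pureStrat s) (pureStrat t) = M s t := by
  simp [pay, pureStrat]

end PureStrat

section IsDist

variable {α : Type*} [Fintype α] {x y : α → ℝ}

lemma IsDist.exists_ne_zero (hx : IsDist x) : ∃ i, x i ≠ 0 := by
  by_contra! h
  simpa [h] using hx.2

lemma IsDist.eq_pureStrat [DecidableEq α] (hx : IsDist x) {s : α} (h : ∀ i, x i ≠ 0 → i = s) :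
    x = pureStrat s := by
  have x_eq_zero : ∀ i, i ≠ s → x i = 0 := fun i => not_imp_comm.1 (h i)
  have x_eq_one : x s = 1 := by
    rw [← hx.2, Fintype.sum_eq_single s x_eq_zero]
  funext i
  rcases eq_or_ne i s with rfl | hi
  · simp [pureStrat, x_eq_one]
  · simp [pureStrat, hi, x_eq_zero]

lemma IsDist.exists_eq_pureStrat [DecidableEq α] (hx : IsDist x) (hy : IsDist y)
    (h : ∀ i j, x i ≠ 0 → y j ≠ 0 → i = j) : ∃ s, x = pureStrat s ∧ y = pureStrat s := by
  obtain ⟨s, hs⟩ := hx.exists_ne_zero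
  have hy_eq : y = pureStrat s := hy.eq_pureStrat fun j hj => (h s j hs hj).symm
  have hys : y s ≠ 0 := hy_eq ▸ pureStrat_ne_zero_iff.2 rfl
  exact ⟨s, hx.eq_pureStrat fun i hi => h i s hi hys, hy_eq⟩

end IsDist

section Pay

variable {α : Type*} [Fintype α] {M : α → α → ℝ} {x y : α → ℝ} {c : ℝ}

lemma sub_pay_eq_sum (M : α → α → ℝ) (c : ℝ) (hx : IsDist x) (hy : IsDist y) :
    c - pay M x y = ∑ i, ∑ j, x i * y j * (c - M i j) := by
  have sum_mul_const : ∑ i, ∑ j, x i * y j * c = c := by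
    simp only [← sum_mul, ← mul_sum, hx.2, hy.2, one_mul]
  simp only [mul_sub, sum_sub_distrib, sum_mul_const, pay]

lemma mul_mul_sub_nonneg (hM : ∀ i j, M i j ≤ c) (hx : IsDist x) (hy : IsDist y) (i j : α) :
    0 ≤ x i * y j * (c - M i j) :=
  mul_nonneg (mul_nonneg (hx.1 i) (hy.1 j)) (sub_nonneg.2 (hM i j))

lemma pay_le (hM : ∀ i j, M i j ≤ c) (hx : IsDist x) (hy : IsDist y) : pay M x y ≤ c := by
  rw [← sub_nonneg, sub_pay_eq_sum M c hx hy]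
  exact sum_nonneg fun i _ => sum_nonneg fun j _ => mul_mul_sub_nonneg hM hx hy i j

lemma pay_eq_iff (hM : ∀ i j, M i j ≤ c) (hx : IsDist x) (hy : IsDist y) :
    pay M x y = c ↔ ∀ i j, x i ≠ 0 → y j ≠ 0 → M i j = c := by
  have term_nonneg := mul_mul_sub_nonneg hM hx hy
  calc pay M x y = c
    _ ↔ ∑ i, ∑ j, x i * y j * (c - M i j) = 0 := by
      rw [← sub_pay_eq_sum M c hx hy, sub_eq_zero, eq_comm]
    _ ↔ ∀ i j, x i * y j * (c - M i j) = 0 := by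
      simp only [sum_eq_zero_iff_of_nonneg, sum_nonneg, term_nonneg, mem_univ, true_implies,
        implies_true]
    _ ↔ ∀ i j, x i ≠ 0 → y j ≠ 0 → M i j = c := by
      simp only [mul_eq_zero, sub_eq_zero, or_iff_not_imp_left, eq_comm (a := c), Classical.not_imp,
        and_imp, ne_eq]

end Pay

section Bimatrix

variable {α : Type*} [Fintype α] {R C : α → α → ℝ} {x y : α → ℝ}

lemma paretoOpt_of_forall_pay_le
    (hR : ∀ x' y', IsDist x' → IsDist y' → pay R x' y' ≤ pay R x y)
    (hC : ∀ x' y', IsDist x' → IsDist y' → pay C x' y' ≤ pay C x y) : ParetoOpt R C x y := by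
  rintro ⟨x', y', hx', hy', hlt | hlt, -⟩
  · exact hlt.not_ge (hR x' y' hx' hy')
  · exact hlt.not_ge (hC x' y' hx' hy')

lemma strongParetoOpt_of_forall_pay_le
    (hR : ∀ x' y', IsDist x' → IsDist y' → pay R x' y' ≤ pay R x y)
    (hC : ∀ x' y', IsDist x' → IsDist y' → pay C x' y' ≤ pay C x y) :
    StrongParetoOpt R C x y := by
  rintro x' y' hx' hy' (hlt | hlt)
  · exact absurd (hR x' y' hx' hy') hlt.not_ge
  · exact absurd (hC x' y' hx' hy') hlt.not_ge

variable {c d : ℝ} {a b : α}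

lemma isNash_iff_pay_eq (hR : ∀ i j, R i j ≤ c) (hC : ∀ i j, C i j ≤ d)
    (ha : ∀ j, R a j = c) (hb : ∀ i, C i b = d) (hx : IsDist x) (hy : IsDist y) :
    IsNash R C x y ↔ pay R x y = c ∧ pay C x y = d := by
  classical
  constructor
  · rintro ⟨-, -, hmaxR, hmaxC⟩
    have pay_a : pay R (pureStrat a) y = c :=
      (pay_eq_iff hR (isDist_pureStrat a) hy).2 fun i j hi _ => pureStrat_ne_zero_iff.1 hi ▸ ha j
    have pay_b : pay C x (pureStrat b) = d :=
      (pay_eq_iff hC hx (isDist_pureStrat b)).2 fun i j _ hj => pureStrat_ne_zero_iff.1 hj ▸ hb i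
    exact ⟨(pay_le hR hx hy).antisymm (pay_a ▸ hmaxR _ (isDist_pureStrat a)),
      (pay_le hC hx hy).antisymm (pay_b ▸ hmaxC _ (isDist_pureStrat b))⟩
  · rintro ⟨hRxy, hCxy⟩
    exact ⟨hx, hy, fun x' hx' => hRxy ▸ pay_le hR hx' hy, fun y' hy' => hCxy ▸ pay_le hC hx hy'⟩

lemma isNash_iff_exists_pureStrat [DecidableEq α] (hR : ∀ i j, R i j ≤ c) (hC : ∀ i j, C i j ≤ d)
    (ha : ∀ j, R a j = c) (hb : ∀ i, C i b = d) (hdiag : ∀ i j, R i j = c ∧ C i j = d ↔ i = j) :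
    IsNash R C x y ↔ ∃ s, x = pureStrat s ∧ y = pureStrat s := by
  constructor
  · intro h
    have ⟨hx, hy, _⟩ := h
    obtain ⟨hRxy, hCxy⟩ := (isNash_iff_pay_eq hR hC ha hb hx hy).1 h
    exact hx.exists_eq_pureStrat hy fun i j hi hj => (hdiag i j).1
      ⟨(pay_eq_iff hR hx hy).1 hRxy i j hi hj, (pay_eq_iff hC hx hy).1 hCxy i j hi hj⟩
  · rintro ⟨s, rfl, rfl⟩
    rw [isNash_iff_pay_eq hR hC ha hb (isDist_pureStrat s) (isDist_pureStrat s),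
      pay_pureStrat, pay_pureStrat, hdiag]

lemma ncard_setOf_isNash [DecidableEq α]
    (h : ∀ x y, IsNash R C x y ↔ ∃ s, x = pureStrat s ∧ y = pureStrat s) :
    {p : (α → ℝ) × (α → ℝ) | IsNash R C p.1 p.2}.ncard = Fintype.card α := by
  have setOf_eq_range : {p : (α → ℝ) × (α → ℝ) | IsNash R C p.1 p.2} =
      Set.range fun s => (pureStrat s, pureStrat s) := by
    ext ⟨x, y⟩
    simp only [Set.mem_ofPred_eq, h, Set.mem_range, Prod.mk.injEq, eq_comm]
  have pair_injective : Function.Injective fun s : α => (pureStrat s, pureStrat s) :=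
    fun _ _ hst => pureStrat_injective (congrArg Prod.fst hst)
  rw [setOf_eq_range, ← Nat.card_coe_set_eq, Nat.card_range_of_injective pair_injective,
    Nat.card_eq_fintype_card]

end Bimatrix

section LeMatrix

/-- The `{0,1}`-matrix of the order relation of `α`, used as the utility matrix of the row player;
for `α = Fin k` it is `D_k`. -/
def leMatrix (α : Type*) [LE α] [DecidableLE α] : α → α → ℝ := fun i j => if i ≤ j then 1 else 0

variable {α : Type*} [LE α] [DecidableLE α]

lemma leMatrix_le_one (i j : α) : leMatrix α i j ≤ 1 := by
  unfold leMatrix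
  split_ifs <;> norm_num

lemma leMatrix_eq_one_iff {i j : α} : leMatrix α i j = 1 ↔ i ≤ j := by
  simp [leMatrix]

lemma diagD_eq_leMatrix (k : ℕ) : diagD k = leMatrix (Fin k) := rfl

lemma diagDT_eq_leMatrix_swap (k : ℕ) : diagDT k = fun i j => leMatrix (Fin k) j i := rfl

end LeMatrix

theorem diagonal_game_nash_general (α : Type*) [Fintype α] [DecidableEq α] [PartialOrder α]
    [OrderBot α] [DecidableLE α] :
    (∀ x y : α → ℝ, IsNash (leMatrix α) (fun i j => leMatrix α j i) x y ↔
      ∃ s : α, x = pureStrat s ∧ y = pureStrat s) ∧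
    {p : (α → ℝ) × (α → ℝ) |
      IsNash (leMatrix α) (fun i j => leMatrix α j i) p.1 p.2}.ncard = Fintype.card α ∧
    (∀ s : α,
      pay (leMatrix α) (pureStrat s) (pureStrat s) = 1 ∧
      pay (fun i j => leMatrix α j i) (pureStrat s) (pureStrat s) = 1 ∧
      ParetoOpt (leMatrix α) (fun i j => leMatrix α j i) (pureStrat s) (pureStrat s) ∧
      StrongParetoOpt (leMatrix α) (fun i j => leMatrix α j i) (pureStrat s) (pureStrat s)) := by
  have hR : ∀ i j, leMatrix α i j ≤ 1 := leMatrix_le_one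
  have hC : ∀ i j, leMatrix α j i ≤ 1 := fun i j => leMatrix_le_one j i
  have bot_row : ∀ j, leMatrix α ⊥ j = 1 := fun _ => leMatrix_eq_one_iff.2 bot_le
  have eq_one_iff_eq : ∀ i j, leMatrix α i j = 1 ∧ leMatrix α j i = 1 ↔ i = j := fun i j => by
    rw [leMatrix_eq_one_iff, leMatrix_eq_one_iff, le_antisymm_iff]
  have nash_iff : ∀ x y, IsNash (leMatrix α) (fun i j => leMatrix α j i) x y ↔
      ∃ s, x = pureStrat s ∧ y = pureStrat s :=
    fun _ _ => isNash_iff_exists_pureStrat hR hC bot_row bot_row eq_one_iff_eq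
  refine ⟨nash_iff, ncard_setOf_isNash nash_iff, fun s => ?_⟩
  obtain ⟨payR, payC⟩ : pay (leMatrix α) (pureStrat s) (pureStrat s) = 1 ∧
      pay (fun i j => leMatrix α j i) (pureStrat s) (pureStrat s) = 1 := by
    simp only [pay_pureStrat, eq_one_iff_eq]
  have maxR : ∀ x' y', IsDist x' → IsDist y' →
      pay (leMatrix α) x' y' ≤ pay (leMatrix α) (pureStrat s) (pureStrat s) :=
    fun _ _ hx' hy' => payR ▸ pay_le hR hx' hy'
  have maxC : ∀ x' y', IsDist x' → IsDist y' → pay (fun i j => leMatrix α j i) x' y' ≤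
      pay (fun i j => leMatrix α j i) (pureStrat s) (pureStrat s) :=
    fun _ _ hx' hy' => payC ▸ pay_le hC hx' hy'
  exact ⟨payR, payC, paretoOpt_of_forall_pay_le maxR maxC,
    strongParetoOpt_of_forall_pay_le maxR maxC⟩

/-- For every `k ≥ 1`, the diagonal game `Ĝ₅[k] = ⟨D_k, D_kᵀ⟩` has exactly `k` Nash
equilibria, namely the pure symmetric profiles `⟨s, s⟩` for `s ∈ [k]`; each of them is
Pareto-Optimal and Strongly Pareto-Optimal and yields utility `1` to each player. -/
theorem diagonal_game_nash (k : ℕ) (hk : 1 ≤ k) :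
    (∀ x y : Fin k → ℝ, IsNash (diagD k) (diagDT k) x y ↔
      ∃ s : Fin k, x = pureStrat s ∧ y = pureStrat s) ∧
    {p : (Fin k → ℝ) × (Fin k → ℝ) | IsNash (diagD k) (diagDT k) p.1 p.2}.ncard = k ∧
    (∀ s : Fin k,
      pay (diagD k) (pureStrat s) (pureStrat s) = 1 ∧
      pay (diagDT k) (pureStrat s) (pureStrat s) = 1 ∧
      ParetoOpt (diagD k) (diagDT k) (pureStrat s) (pureStrat s) ∧
      StrongParetoOpt (diagD k) (diagDT k) (pureStrat s) (pureStrat s)) := by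
  have : NeZero k := ⟨Nat.one_le_iff_ne_zero.1 hk⟩
  simpa only [diagD_eq_leMatrix, diagDT_eq_leMatrix_swap, Fintype.card_fin] using
    diagonal_game_nash_general (Fin k)
end

section
/- Fix a win-lose bimatrix game ⟨R,C⟩ with the positive utility property and consider any Nash equilibrium σ = ⟨σ_1, σ_2⟩ of its GHR-symmetrization ⟨S, Sᵀ⟩. Then exactly one of the following three cases holds: (C.1) ←σ_1, →σ_1, ←σ_2, →σ_2 are all nonzero vectors; (C.2) ←σ_1 = →σ_2 = 0ⁿ and →σ_1, ←σ_2 are both nonzero; (C.3) →σ_1 = ←σ_2 = 0ⁿ and ←σ_1, →σ_2 are both nonzero. -/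
open Finset

/-- All entries of `M` lie in `{0, 1}`. -/
def WinLose {α : Type*} (M : α → α → ℝ) : Prop :=
  ∀ s₁ s₂, M s₁ s₂ = 0 ∨ M s₁ s₂ = 1

/-- The matrix `S = [[0, R], [Cᵀ, 0]]` of the GHR-symmetrization of `⟨R, C⟩`. -/
def ghrS {n : ℕ} (R C : Fin n → Fin n → ℝ) :
    (Fin n ⊕ Fin n) → (Fin n ⊕ Fin n) → ℝ
  | .inl i, .inr j => R i j
  | .inr i, .inl j => C j i
  | _, _ => 0

/-- The transpose `Sᵀ` of the matrix of the GHR-symmetrization. -/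
def ghrST {n : ℕ} (R C : Fin n → Fin n → ℝ) :
    (Fin n ⊕ Fin n) → (Fin n ⊕ Fin n) → ℝ :=
  fun a b => ghrS R C b a

/-- The restriction `←x` of a mixed strategy on `[2n]` to the first `n` strategies. -/
def leftPart {n : ℕ} (x : (Fin n ⊕ Fin n) → ℝ) : Fin n → ℝ := fun i => x (Sum.inl i)

/-- The restriction `→x` of a mixed strategy on `[2n]` to the last `n` strategies. -/
def rightPart {n : ℕ} (x : (Fin n ⊕ Fin n) → ℝ) : Fin n → ℝ := fun i => x (Sum.inr i)

/-- Case (C.1): all four half-vectors are nonzero. -/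
def TriC1 {n : ℕ} (x y : (Fin n ⊕ Fin n) → ℝ) : Prop :=
  leftPart x ≠ 0 ∧ rightPart x ≠ 0 ∧ leftPart y ≠ 0 ∧ rightPart y ≠ 0

/-- Case (C.2): `←σ₁ = →σ₂ = 0ⁿ` and `→σ₁, ←σ₂` are nonzero. -/
def TriC2 {n : ℕ} (x y : (Fin n ⊕ Fin n) → ℝ) : Prop :=
  leftPart x = 0 ∧ rightPart y = 0 ∧ rightPart x ≠ 0 ∧ leftPart y ≠ 0

/-- Case (C.3): `→σ₁ = ←σ₂ = 0ⁿ` and `←σ₁, →σ₂` are nonzero. -/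
def TriC3 {n : ℕ} (x y : (Fin n ⊕ Fin n) → ℝ) : Prop :=
  rightPart x = 0 ∧ leftPart y = 0 ∧ leftPart x ≠ 0 ∧ rightPart y ≠ 0

/-!
The utility of a best response is an average of the utilities of pure strategies, none of which
exceeds it, so every pure strategy in its support attains it. Suppose now `←σ₂ = 0`. Each of
player 1's last `n` strategies is paid only against the opponent's first `n`, so it earns `0`; but
`→σ₂ ≠ 0`, so by positive utility one of her first `n` strategies earns more, and hence `→σ₁ = 0`.
Exchanging halves and players makes `←σ₂ = 0` equivalent to `→σ₁ = 0` and `→σ₂ = 0` equivalent to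
`←σ₁ = 0`. The two halves of a distribution are never both zero, which leaves only the three cases.
-/

open scoped Matrix

section Payoff

variable {α : Type*} [Fintype α] {M R C : α → α → ℝ} {x y : α → ℝ}

/-- `x` is a best response to `y`, in mixed strategies, for the player with utility matrix `M`,
whose strategies index the rows of `M`. Both players' equilibrium conditions take this form, player
2's with the transpose of her matrix; in a symmetrization the two matrices then coincide. -/
def IsBestResponse (M : α → α → ℝ) (x y : α → ℝ) : Prop :=
  IsDist x ∧ ∀ x', IsDist x' → pay M x' y ≤ pay M x y

theorem pay_eq_dotProduct_mulVec (M : α → α → ℝ) (x y : α → ℝ) :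
    pay M x y = x ⬝ᵥ Matrix.of M *ᵥ y := by
  simp only [pay, dotProduct, Matrix.mulVec, Matrix.of_apply, mul_sum, mul_assoc,
    mul_comm (y _)]

theorem pay_transpose (M : α → α → ℝ) (x y : α → ℝ) :
    pay (fun a b => M b a) x y = pay M y x := by
  unfold pay
  rw [sum_comm]
  simp only [mul_comm (x _)]

theorem isDist_single [DecidableEq α] (a : α) : IsDist (Pi.single a (1 : ℝ)) :=
  single_mem_stdSimplex ℝ a

theorem IsDist.ne_zero (hx : IsDist x) : x ≠ 0 := by
  rintro rfl
  simpa using hx.2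

theorem IsNash.isBestResponse_left (h : IsNash R C x y) : IsBestResponse R x y :=
  ⟨h.1, h.2.2.1⟩

theorem IsNash.isBestResponse_right (h : IsNash R C x y) :
    IsBestResponse (fun a b => C b a) y x :=
  ⟨h.2.1, fun y' hy' => by simpa only [pay_transpose] using h.2.2.2 y' hy'⟩

theorem IsBestResponse.mulVec_le_pay (h : IsBestResponse M x y) (a : α) :
    (Matrix.of M *ᵥ y) a ≤ pay M x y := by
  classical
  calc (Matrix.of M *ᵥ y) a = pay M (Pi.single a 1) y := by
        rw [pay_eq_dotProduct_mulVec, single_one_dotProduct]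
    _ ≤ pay M x y := h.2 _ (isDist_single a)

theorem IsBestResponse.mulVec_eq_pay (h : IsBestResponse M x y) {a : α} (ha : x a ≠ 0) :
    (Matrix.of M *ᵥ y) a = pay M x y := by
  have gap_nonneg : ∀ b ∈ univ, 0 ≤ x b * (pay M x y - (Matrix.of M *ᵥ y) b) := fun b _ =>
    mul_nonneg (h.1.1 b) (sub_nonneg.mpr (h.mulVec_le_pay b))
  have sum_gap : ∑ b, x b * (pay M x y - (Matrix.of M *ᵥ y) b) = 0 := by
    simp only [mul_sub, sum_sub_distrib, ← sum_mul, h.1.2, one_mul]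
    rw [sub_eq_zero, pay_eq_dotProduct_mulVec, dotProduct]
  have gap_eq_zero := (sum_eq_zero_iff_of_nonneg gap_nonneg).mp sum_gap a (mem_univ a)
  exact (sub_eq_zero.mp ((mul_eq_zero.mp gap_eq_zero).resolve_left ha)).symm

theorem IsBestResponse.eq_zero_of_mulVec_lt (h : IsBestResponse M x y) {a b : α}
    (hab : (Matrix.of M *ᵥ y) a < (Matrix.of M *ᵥ y) b) : x a = 0 := by
  by_contra ha
  exact (h.mulVec_le_pay b).not_gt (h.mulVec_eq_pay ha ▸ hab)

end Payoff

theorem WinLose.nonneg {α : Type*} {M : α → α → ℝ} (h : WinLose M) (a b : α) : 0 ≤ M a b := by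
  rcases h a b with hab | hab <;> simp [hab]

theorem exists_mulVec_pos {ι κ K : Type*} [Fintype κ] [Semiring K] [PartialOrder K]
    [IsStrictOrderedRing K] {A : Matrix ι κ K} {z : κ → K} (hA : ∀ i j, 0 ≤ A i j)
    (hcol : ∀ j, ∃ i, 0 < A i j) (hz : ∀ j, 0 ≤ z j) (hz0 : z ≠ 0) :
    ∃ i, 0 < (A *ᵥ z) i := by
  obtain ⟨j, hj⟩ := Function.ne_iff.mp hz0
  obtain ⟨i, hij⟩ := hcol j
  exact ⟨i, sum_pos' (fun k _ => mul_nonneg (hA i k) (hz k))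
    ⟨j, mem_univ j, mul_pos hij ((hz j).lt_of_ne' hj)⟩⟩

section Symmetrization

variable {n : ℕ} {R C : Fin n → Fin n → ℝ} {x y : Fin n ⊕ Fin n → ℝ}

theorem IsDist.leftPart_ne_zero_or_rightPart_ne_zero (hx : IsDist x) :
    leftPart x ≠ 0 ∨ rightPart x ≠ 0 := by
  by_contra! h
  exact hx.ne_zero (funext (Sum.rec (congrFun h.1) (congrFun h.2)))

theorem ghrS_eq_fromBlocks (R C : Fin n → Fin n → ℝ) :
    Matrix.of (ghrS R C) = Matrix.fromBlocks 0 (Matrix.of R) (Matrix.of C)ᵀ 0 := by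
  ext (i | i) (j | j) <;> rfl

theorem ghrS_mulVec (R C : Fin n → Fin n → ℝ) (y : Fin n ⊕ Fin n → ℝ) :
    Matrix.of (ghrS R C) *ᵥ y =
      Sum.elim (Matrix.of R *ᵥ rightPart y) ((Matrix.of C)ᵀ *ᵥ leftPart y) := by
  rw [ghrS_eq_fromBlocks, Matrix.fromBlocks_mulVec, Matrix.zero_mulVec, Matrix.zero_mulVec,
    zero_add, add_zero]
  rfl

theorem IsBestResponse.rightPart_eq_zero (h : IsBestResponse (ghrS R C) x y)
    (hy : leftPart y = 0) (hpos : ∃ i, 0 < (Matrix.of R *ᵥ rightPart y) i) :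
    rightPart x = 0 := by
  obtain ⟨i, hi⟩ := hpos
  refine funext fun j => h.eq_zero_of_mulVec_lt (a := .inr j) (b := .inl i) ?_
  simpa only [ghrS_mulVec, Sum.elim_inl, Sum.elim_inr, hy, Matrix.mulVec_zero,
    Pi.zero_apply] using hi

theorem IsBestResponse.leftPart_eq_zero (h : IsBestResponse (ghrS R C) x y)
    (hy : rightPart y = 0) (hpos : ∃ j, 0 < ((Matrix.of C)ᵀ *ᵥ leftPart y) j) :
    leftPart x = 0 := by
  obtain ⟨j, hj⟩ := hpos
  refine funext fun i => h.eq_zero_of_mulVec_lt (a := .inl i) (b := .inr j) ?_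
  simpa only [ghrS_mulVec, Sum.elim_inl, Sum.elim_inr, hy, Matrix.mulVec_zero,
    Pi.zero_apply] using hj

theorem IsBestResponse.rightPart_eq_zero_of_nonneg (h : IsBestResponse (ghrS R C) x y)
    (hy : IsDist y) (hR : ∀ i j, 0 ≤ R i j) (pupR : ∀ j, ∃ i, 0 < R i j)
    (hy0 : leftPart y = 0) : rightPart x = 0 :=
  h.rightPart_eq_zero hy0 <| exists_mulVec_pos hR pupR (fun j => hy.1 (.inr j)) <|
    hy.leftPart_ne_zero_or_rightPart_ne_zero.resolve_left (not_not_intro hy0)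

theorem IsBestResponse.leftPart_eq_zero_of_nonneg (h : IsBestResponse (ghrS R C) x y)
    (hy : IsDist y) (hC : ∀ i j, 0 ≤ C i j) (pupC : ∀ i, ∃ j, 0 < C i j)
    (hy0 : rightPart y = 0) : leftPart x = 0 :=
  h.leftPart_eq_zero hy0 <| exists_mulVec_pos (fun j i => hC i j) pupC (fun i => hy.1 (.inl i)) <|
    hy.leftPart_ne_zero_or_rightPart_ne_zero.resolve_right (not_not_intro hy0)

end Symmetrization

theorem ghr_nash_trichotomy_general {n : ℕ}
    (R C : Fin n → Fin n → ℝ) (hR : ∀ i j, 0 ≤ R i j) (hC : ∀ i j, 0 ≤ C i j)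
    (pupR : ∀ s₂, ∃ s₁, 0 < R s₁ s₂) (pupC : ∀ s₁, ∃ s₂, 0 < C s₁ s₂)
    (x y : (Fin n ⊕ Fin n) → ℝ)
    (hNE : IsNash (ghrS R C) (ghrST R C) x y) :
    (TriC1 x y ∧ ¬ TriC2 x y ∧ ¬ TriC3 x y) ∨
    (¬ TriC1 x y ∧ TriC2 x y ∧ ¬ TriC3 x y) ∨
    (¬ TriC1 x y ∧ ¬ TriC2 x y ∧ TriC3 x y) := by
  have hxy : IsBestResponse (ghrS R C) x y := hNE.isBestResponse_left
  have hyx : IsBestResponse (ghrS R C) y x := hNE.isBestResponse_right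
  have left_iff : leftPart x = 0 ↔ rightPart y = 0 :=
    ⟨hyx.rightPart_eq_zero_of_nonneg hxy.1 hR pupR, hxy.leftPart_eq_zero_of_nonneg hyx.1 hC pupC⟩
  have right_iff : rightPart x = 0 ↔ leftPart y = 0 :=
    ⟨hyx.leftPart_eq_zero_of_nonneg hxy.1 hC pupC, hxy.rightPart_eq_zero_of_nonneg hyx.1 hR pupR⟩
  have hx := hxy.1.leftPart_ne_zero_or_rightPart_ne_zero
  unfold TriC1 TriC2 TriC3
  tauto

/-- For a win-lose bimatrix game with the positive utility property, every Nash
equilibrium of its GHR-symmetrization satisfies exactly one of the three cases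
(C.1), (C.2), (C.3). -/
theorem ghr_nash_trichotomy {n : ℕ}
    (R C : Fin n → Fin n → ℝ) (hR : WinLose R) (hC : WinLose C)
    (pupR : ∀ s₂, ∃ s₁, 0 < R s₁ s₂) (pupC : ∀ s₁, ∃ s₂, 0 < C s₁ s₂)
    (x y : (Fin n ⊕ Fin n) → ℝ)
    (hNE : IsNash (ghrS R C) (ghrST R C) x y) :
    (TriC1 x y ∧ ¬ TriC2 x y ∧ ¬ TriC3 x y) ∨
    (¬ TriC1 x y ∧ TriC2 x y ∧ ¬ TriC3 x y) ∨
    (¬ TriC1 x y ∧ ¬ TriC2 x y ∧ TriC3 x y) :=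
  ghr_nash_trichotomy_general R C hR.nonneg hC.nonneg pupR pupC x y hNE
end

section
/- For the win-lose game G = G(Ĝ, φ) constructed from an r-player win-lose game Ĝ with the positive utility property and a 3SAT formula φ with n ≥ 4 variables, the following two conditions hold: (C.1) every Nash equilibrium of Ĝ, regarded via the inclusions Σ̂_i ⊆ Σ_i as a mixed profile of G, is a Nash equilibrium of G; (C.2) there is no Nash equilibrium σ of G outside NE(Ĝ) such that Supp(σ_i) ⊆ Σ̂_i for some player i ∈ {1,…,r}. -/
open Finset

/-- Expected utility of player `i` in the mixed profile `σ`. -/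
noncomputable def EU {ι : Type*} [Fintype ι] [DecidableEq ι] {S : ι → Type*}
    [∀ i, Fintype (S i)] (U : (i : ι) → (∀ j, S j) → ℝ)
    (σ : ∀ j, S j → ℝ) (i : ι) : ℝ :=
  ∑ s : ∀ j, S j, (∏ j, σ j (s j)) * U i s

/-- `σ` is a (mixed) Nash equilibrium of the game with utilities `U`. -/
def IsNashEq {ι : Type*} [Fintype ι] [DecidableEq ι] {S : ι → Type*} [∀ i, Fintype (S i)]
    (U : (i : ι) → (∀ j, S j) → ℝ) (σ : ∀ j, S j → ℝ) : Prop :=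
  (∀ i, IsDist (σ i)) ∧
    ∀ (i : ι) (τ : S i → ℝ), IsDist τ →
      EU U (Function.update σ i τ) i ≤ EU U σ i

/-! ## The player and strategy sets of the game `G(Ĝ, φ)` -/

/-- The players: the two special players (`Sum.inl`), plus `k` further players. -/
abbrev Player (k : ℕ) : Type := Fin 2 ⊕ Fin k

/-- A literal `ℓ_j` (second component `true`) or `ℓ̄_j` (second component `false`). -/
abbrev Lit (n : ℕ) : Type := Fin n × Bool

/-- A pair variable `v_{j,k}` with `j ≠ k`. -/
abbrev PairVar (n : ℕ) : Type := {p : Fin n × Fin n // p.1 ≠ p.2}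

/-- The non-gadget strategies of a special player: literals, clauses and pair variables. -/
abbrev SpecialAux (n m : ℕ) : Type := Lit n ⊕ (Fin m ⊕ PairVar n)

/-- The strategy set of each player of `G(Ĝ, φ)`: gadget strategies together with the
literals, clauses and pair variables (for the special players), resp. the single extra
strategy `δ` (for the non-special players). -/
def Strat {k : ℕ} (Shat : Player k → Type) (n m : ℕ) : Player k → Type
  | .inl p => Shat (.inl p) ⊕ SpecialAux n m
  | .inr q => Shat (.inr q) ⊕ PUnit

instance {k n m : ℕ} (Shat : Player k → Type) [∀ i, Fintype (Shat i)]
    (i : Player k) : Fintype (Strat Shat n m i) := by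
  cases i with
  | inl p => exact inferInstanceAs (Fintype (Shat (.inl p) ⊕ SpecialAux n m))
  | inr q => exact inferInstanceAs (Fintype (Shat (.inr q) ⊕ PUnit))

/-- The gadget strategy underlying a strategy of `G(Ĝ, φ)`, if any. -/
def toGadget {k n m : ℕ} (Shat : Player k → Type) :
    ∀ i : Player k, Strat Shat n m i → Option (Shat i)
  | .inl _, .inl a => some a
  | .inl _, .inr _ => none
  | .inr _, .inl a => some a
  | .inr _, .inr _ => none

/-- The strategy chosen by the special player `q` in the profile `s`. -/
def specialOf {k n m : ℕ} (Shat : Player k → Type) (q : Fin 2)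
    (s : ∀ j, Strat Shat n m j) : Shat (.inl q) ⊕ SpecialAux n m :=
  s (.inl q)

/-- The other special player. -/
def otherP : Fin 2 → Fin 2 := fun p => if p = 0 then 1 else 0

/-- Whether a strategy of a special player lies in `{ℓ₀, ℓ̄₀, ℓ₁, ℓ̄₁} ∪ 𝒞 ∪ V`
(Case (10) of the utility table). -/
def allowedB {n m : ℕ} {α : Type*} : α ⊕ SpecialAux n m → Bool
  | .inl _ => false
  | .inr (.inl l) => decide (l.1.val ≤ 1)
  | .inr (.inr _) => true

/-- Utilities ⟨player 1, player 2, each non-special player⟩ in a profile in which the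
special players choose the non-gadget strategies `a₁`, `a₂` and every non-special player
chooses `δ` (Cases (1)–(6) and part of Case (11) of the utility table).  The cyclic
difference `I(ℓ′) − I(ℓ)` is computed as `(I(ℓ′) + n − I(ℓ)) % n`. -/
noncomputable def pairU {n m : ℕ} (Cl : Fin m → Finset (Lit n)) :
    SpecialAux n m → SpecialAux n m → ℝ × ℝ × ℝ
  | .inl l, .inl l' =>
      if l' = (l.1, !l.2) then (0, 0, 1)
      else if (l'.1.val + n - l.1.val) % n ≤ 1 then (1, 0, 1)
      else if (l'.1.val + n - l.1.val) % n ≤ 3 then (0, 1, 1)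
      else (0, 0, 1)
  | .inl l, .inr (.inl c) => if (l.1, !l.2) ∈ Cl c then (0, 1, 1) else (0, 0, 0)
  | .inl l, .inr (.inr v) => if l.1 = v.1.1 ∨ l.1 = v.1.2 then (0, 1, 1) else (0, 0, 0)
  | .inr (.inl c), .inl l => if (l.1, !l.2) ∈ Cl c then (1, 0, 1) else (0, 0, 0)
  | .inr (.inr v), .inl l => if l.1 = v.1.1 ∨ l.1 = v.1.2 then (1, 0, 1) else (0, 0, 0)
  | .inr _, .inr _ => (0, 0, 0)

/-- The utility function of the game `G(Ĝ, φ)`, following Cases (1)–(11) of the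
utility table. -/
noncomputable def BigU {k n m : ℕ} (Shat : Player k → Type) [∀ i, Fintype (Shat i)]
    (Uhat : (i : Player k) → (∀ j, Shat j) → ℝ) (Cl : Fin m → Finset (Lit n))
    (i : Player k) (s : ∀ j, Strat Shat n m j) : ℝ :=
  -- Case (7): all players choose gadget strategies
  if h : ∀ j, (toGadget Shat j (s j)).isSome = true then
    Uhat i (fun j => (toGadget Shat j (s j)).get (h j))
  -- Case (8): at least two, but not all, players choose gadget strategies
  else if 1 < (univ.filter fun j => (toGadget Shat j (s j)).isSome = true).card then
    if (toGadget Shat i (s i)).isSome then 1 else 0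
  -- Cases (9), (10), (11): exactly one player chooses a gadget strategy
  else if (univ.filter fun j => (toGadget Shat j (s j)).isSome = true).card = 1 then
    if (toGadget Shat i (s i)).isSome then
      match i with
      | .inl p => if allowedB (specialOf Shat (otherP p) s) then 1 else 0
      | .inr _ => 1
    else 0
  -- Cases (1)–(6), (11): no player chooses a gadget strategy, so every non-special
  -- player chooses `δ` and the special players choose non-gadget strategies
  else
    match specialOf Shat 0 s, specialOf Shat 1 s with
    | .inr a₁, .inr a₂ =>
        (match i with
         | .inl p => if p = 0 then (pairU Cl a₁ a₂).1 else (pairU Cl a₁ a₂).2.1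
         | .inr _ => (pairU Cl a₁ a₂).2.2)
    | _, _ => 0

/-- A mixed profile of the gadget game `Ĝ`, regarded as a mixed profile of `G(Ĝ, φ)`
via the inclusions `Σ̂ᵢ ⊆ Σᵢ`. -/
def liftProfile {k n m : ℕ} (Shat : Player k → Type)
    (σh : ∀ i, Shat i → ℝ) : ∀ i, Strat Shat n m i → ℝ
  | .inl p => Sum.elim (σh (.inl p)) (fun _ => 0)
  | .inr q => Sum.elim (σh (.inr q)) (fun _ => 0)

/-- The strategy "literal `(j, b)`" of the special player `p`. -/
def litStrat {k n m : ℕ} (Shat : Player k → Type) (p : Fin 2) (j : Fin n) (b : Bool) :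
    Strat Shat n m (Sum.inl p) :=
  Sum.inr (Sum.inl (j, b))

/-- The strategy `δ` of the non-special player `q`. -/
def deltaStrat {k n m : ℕ} (Shat : Player k → Type) (q : Fin k) :
    Strat Shat n m (Sum.inr q) :=
  Sum.inr PUnit.unit

/-- The assignment `γ` satisfies the 3SAT formula with clauses `Cl`. -/
def Satisfies {n m : ℕ} (Cl : Fin m → Finset (Lit n)) (γ : Fin n → Bool) : Prop :=
  ∀ c, ∃ l ∈ Cl c, γ l.1 = l.2

/-! By multilinearity of expected utility, equilibria can be tested on pure deviations, and a
player who plays a pure strategy with positive probability earns exactly its utility. Against an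
opponent supported on gadget strategies every non-gadget strategy earns `0`. Hence non-gadget
deviations never improve on an equilibrium of `Ĝ`. Conversely, if some player is supported on gadget
strategies and another plays a non-gadget strategy with positive probability, the latter has
expected utility `0`, whereas some gadget strategy earns her a positive amount: Case (8) provides it
if a third player may leave the gadget strategies, and the positive utility property otherwise. -/

section FiniteGames

open Function

variable {ι : Type*} [DecidableEq ι] {S : ι → Type*}

open Classical in
/-- The mixed profile in which player `i` deviates from `σ` to the pure strategy `t`, encoded as a
point mass. -/
noncomputable def pureDeviation (σ : ∀ j, S j → ℝ) (i : ι) (t : S i) : ∀ j, S j → ℝ :=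
  update σ i (Pi.single t 1)

lemma pureDeviation_apply_self (σ : ∀ j, S j → ℝ) (i : ι) (t : S i) :
    pureDeviation σ i t i t = 1 := by
  simp [pureDeviation]

lemma pureDeviation_of_ne (σ : ∀ j, S j → ℝ) {i j : ι} (hj : j ≠ i) (t : S i) :
    pureDeviation σ i t j = σ j :=
  update_of_ne hj _ _

lemma eq_of_pureDeviation_ne_zero {σ : ∀ j, S j → ℝ} {i : ι} {t s : S i}
    (h : pureDeviation σ i t i s ≠ 0) : s = t := by
  contrapose! h
  simp [pureDeviation, h]

lemma pureDeviation_nonneg {σ : ∀ j, S j → ℝ} (hσ : ∀ j t, 0 ≤ σ j t) (i : ι) (t : S i)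
    (j : ι) (s : S j) : 0 ≤ pureDeviation σ i t j s := by
  classical
  obtain rfl | hj := eq_or_ne j i
  · rw [pureDeviation, update_self]
    exact (Pi.single_nonneg.2 zero_le_one : (0 : S j → ℝ) ≤ Pi.single t 1) s
  · rw [pureDeviation_of_ne σ hj]
    exact hσ j s

lemma IsDist.exists_pos {α : Type*} [Fintype α] {x : α → ℝ} (hx : IsDist x) : ∃ t, 0 < x t := by
  by_contra! h
  exact (zero_lt_one.trans_eq hx.2.symm).not_ge (sum_nonpos fun t _ => h t)

variable [Fintype ι] [∀ i, Fintype (S i)] {U : (i : ι) → (∀ j, S j) → ℝ} {σ : ∀ j, S j → ℝ}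

lemma EU_nonneg {i : ι} (hσ : ∀ j t, 0 ≤ σ j t) (hU : ∀ s, 0 ≤ U i s) : 0 ≤ EU U σ i :=
  sum_nonneg fun s _ => mul_nonneg (prod_nonneg fun j _ => hσ j (s j)) (hU s)

lemma EU_pos {i : ι} (hσ : ∀ j t, 0 ≤ σ j t) (hU : ∀ s, 0 ≤ U i s) {s : ∀ j, S j}
    (hs : ∀ j, 0 < σ j (s j)) (hUs : 0 < U i s) : 0 < EU U σ i :=
  sum_pos' (fun s' _ => mul_nonneg (prod_nonneg fun j _ => hσ j (s' j)) (hU s'))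
    ⟨s, mem_univ s, mul_pos (prod_pos fun j _ => hs j) hUs⟩

lemma EU_eq_zero {i : ι} (h : ∀ s, (∀ j, σ j (s j) ≠ 0) → U i s = 0) : EU U σ i = 0 := by
  refine sum_eq_zero fun s _ => ?_
  by_cases hs : ∀ j, σ j (s j) ≠ 0
  · rw [h s hs, mul_zero]
  · obtain ⟨j, hj⟩ := not_forall_not.1 hs
    rw [prod_eq_zero (mem_univ j) hj, zero_mul]

lemma EU_pureDeviation_eq_zero {i l : ι} {t : S i}
    (h : ∀ s, s i = t → (∀ j ≠ i, σ j (s j) ≠ 0) → U l s = 0) :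
    EU U (pureDeviation σ i t) l = 0 := by
  refine EU_eq_zero fun s hs => h s (eq_of_pureDeviation_ne_zero (hs i)) fun j hj => ?_
  rw [← pureDeviation_of_ne σ hj t]
  exact hs j

lemma EU_pureDeviation_pos {i l : ι} {t : S i} (hσ : ∀ j t, 0 ≤ σ j t) (hU : ∀ s, 0 ≤ U l s)
    {s : ∀ j, S j} (hs : ∀ j ≠ i, 0 < σ j (s j)) (hUs : 0 < U l (update s i t)) :
    0 < EU U (pureDeviation σ i t) l := by
  refine EU_pos (pureDeviation_nonneg hσ i t) hU (fun j => ?_) hUs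
  obtain rfl | hj := eq_or_ne j i
  · rw [update_self, pureDeviation_apply_self]
    exact one_pos
  · rw [update_of_ne hj, pureDeviation_of_ne σ hj]
    exact hs j hj

lemma EU_update (U : (i : ι) → (∀ j, S j) → ℝ) (σ : ∀ j, S j → ℝ) (i l : ι) (τ : S i → ℝ) :
    EU U (update σ i τ) l
      = ∑ s : ∀ j, S j, τ (s i) * ((∏ j ∈ univ \ {i}, σ j (s j)) * U l s) := by
  refine sum_congr rfl fun s _ => ?_
  rw [← mul_assoc, ← prod_update_of_mem (mem_univ i)]
  congr! 2 with j
  exact apply_update (fun j x => x (s j)) σ i τ j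

lemma EU_update_eq_sum_pureDeviation (U : (i : ι) → (∀ j, S j) → ℝ) (σ : ∀ j, S j → ℝ) (i l : ι)
    (τ : S i → ℝ) :
    EU U (update σ i τ) l = ∑ t, τ t * EU U (pureDeviation σ i t) l := by
  classical
  simp only [pureDeviation, EU_update, mul_sum]
  rw [sum_comm]
  refine sum_congr rfl fun s _ => ?_
  simp [Pi.single_apply]

lemma EU_eq_sum_pureDeviation (U : (i : ι) → (∀ j, S j) → ℝ) (σ : ∀ j, S j → ℝ) (i l : ι) :
    EU U σ l = ∑ t, σ i t * EU U (pureDeviation σ i t) l := by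
  rw [← EU_update_eq_sum_pureDeviation, update_eq_self]

theorem isNashEq_iff_pureDeviation :
    IsNashEq U σ ↔
      (∀ i, IsDist (σ i)) ∧ ∀ i t, EU U (pureDeviation σ i t) i ≤ EU U σ i := by
  classical
  refine and_congr_right fun _ =>
    ⟨fun h i t => h i _ (single_mem_stdSimplex ℝ t), fun h i τ hτ => ?_⟩
  calc EU U (update σ i τ) i
      = ∑ t, τ t * EU U (pureDeviation σ i t) i := EU_update_eq_sum_pureDeviation U σ i i τ
    _ ≤ ∑ t, τ t * EU U σ i := by gcongr with t; exacts [hτ.1 t, h i t]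
    _ = EU U σ i := by rw [← sum_mul, hτ.2, one_mul]

theorem IsNashEq.EU_pureDeviation_eq (hσ : IsNashEq U σ) {i : ι} {t : S i} (ht : σ i t ≠ 0) :
    EU U (pureDeviation σ i t) i = EU U σ i := by
  obtain ⟨hdist, hdev⟩ := isNashEq_iff_pureDeviation.1 hσ
  have hnonneg : ∀ u ∈ univ, 0 ≤ σ i u * (EU U σ i - EU U (pureDeviation σ i u) i) :=
    fun u _ => mul_nonneg ((hdist i).1 u) (sub_nonneg.2 (hdev i u))
  have hsum : ∑ u, σ i u * (EU U σ i - EU U (pureDeviation σ i u) i) = 0 := by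
    simp only [mul_sub, sum_sub_distrib, ← sum_mul, (hdist i).2, one_mul,
      ← EU_eq_sum_pureDeviation, sub_self]
  have hzero := (sum_eq_zero_iff_of_nonneg hnonneg).1 hsum t (mem_univ t)
  exact (sub_eq_zero.1 ((mul_eq_zero.1 hzero).resolve_left ht)).symm

end FiniteGames

section Restriction

open Function

lemma isDist_extend_iff {α β : Type*} [Fintype α] [Fintype β] {f : α → β} (hf : Injective f)
    {x : α → ℝ} : IsDist (extend f x 0) ↔ IsDist x := by
  have hsum : ∑ b, extend f x 0 b = ∑ a, x a := by
    refine (sum_of_injOn f hf.injOn (by simp) (fun b _ hb => ?_)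
      fun a _ => (hf.extend_apply x 0 a).symm).symm
    exact extend_apply' _ _ _ (by simpa using hb)
  unfold IsDist
  rw [hsum]
  refine and_congr_left fun _ => ⟨fun h a => hf.extend_apply x 0 a ▸ h (f a), fun h b => ?_⟩
  by_cases hb : ∃ a, f a = b
  · obtain ⟨a, rfl⟩ := hb
    exact (hf.extend_apply x 0 a).symm ▸ h a
  · rw [extend_apply' _ _ _ hb, Pi.zero_apply]

lemma extend_single {α β M : Type*} [Zero M] [DecidableEq α] [DecidableEq β] {f : α → β}
    (hf : Injective f) (a : α) (c : M) :
    extend f (Pi.single a c) 0 = Pi.single (f a) c := by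
  funext b
  by_cases hb : ∃ a', f a' = b
  · obtain ⟨a', rfl⟩ := hb
    simp [hf.extend_apply, Pi.single_apply, hf.eq_iff]
  · have hne : b ≠ f a := fun h => hb ⟨a, h.symm⟩
    rw [extend_apply' _ _ _ hb, Pi.single_eq_of_ne hne, Pi.zero_apply]

variable {ι : Type*} {S T : ι → Type*}

/-- Extension by zero, along maps `f i : S i → T i`, of a mixed profile over the strategy sets `S`
to one over the strategy sets `T`; meaningful for injective `f i`. -/
noncomputable def extendProfile (f : ∀ i, S i → T i) (σ : ∀ i, S i → ℝ) : ∀ i, T i → ℝ :=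
  fun i => extend (f i) (σ i) 0

/-- The utilities of the game obtained from `U` by restricting each player `i` to the strategies in
the image of `f i`. -/
def restrictUtility (f : ∀ i, S i → T i) (U : (i : ι) → (∀ j, T j) → ℝ) :
    (i : ι) → (∀ j, S j) → ℝ :=
  fun i s => U i (Pi.map f s)

variable {f : ∀ i, S i → T i}

lemma extendProfile_comp (hf : ∀ i, Injective (f i)) {σ : ∀ i, T i → ℝ}
    (hσ : ∀ i, support (σ i) ⊆ Set.range (f i)) :
    extendProfile f (fun i => σ i ∘ f i) = σ := by
  funext i t
  by_cases ht : ∃ a, f i a = t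
  · obtain ⟨a, rfl⟩ := ht
    exact (hf i).extend_apply _ _ a
  · exact (extend_apply' _ _ _ ht).trans (notMem_support.1 fun h => ht (hσ i h)).symm

lemma support_extendProfile_subset (hf : ∀ i, Injective (f i)) (σ : ∀ i, S i → ℝ) (i : ι) :
    support (extendProfile f σ i) ⊆ Set.range (f i) :=
  (support_extend_zero (hf i)).trans_subset (Set.image_subset_range _ _)

variable [DecidableEq ι]

lemma pureDeviation_extendProfile (hf : ∀ i, Injective (f i)) (σ : ∀ i, S i → ℝ) (i : ι)
    (a : S i) :
    pureDeviation (extendProfile f σ) i (f i a) = extendProfile f (pureDeviation σ i a) := by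
  classical
  simp only [pureDeviation, ← extend_single (hf i)]
  exact (Pi.map_update (f := fun i (x : S i → ℝ) => extend (f i) x 0) σ i (Pi.single a 1)).symm

variable [Fintype ι] [∀ i, Fintype (S i)] [∀ i, Fintype (T i)]

lemma EU_extendProfile (hf : ∀ i, Injective (f i)) (U : (i : ι) → (∀ j, T j) → ℝ)
    (σ : ∀ i, S i → ℝ) (i : ι) :
    EU U (extendProfile f σ) i = EU (restrictUtility f U) σ i := by
  refine (sum_of_injOn (Pi.map f) (Injective.piMap hf).injOn (by simp) ?_ ?_).symm
  · intro t _ ht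
    have ht' : t ∉ Set.range (Pi.map f) := by simpa using ht
    obtain ⟨j, hj⟩ : ∃ j, t j ∉ Set.range (f j) := by
      simpa only [Set.range_piMap, Set.mem_univ_pi, not_forall] using ht'
    rw [prod_eq_zero (mem_univ j) (extend_apply' _ _ _ hj), zero_mul]
  · intro s _
    simp only [extendProfile, restrictUtility, Pi.map_apply, (hf _).extend_apply]

theorem isNashEq_extendProfile_iff (hf : ∀ i, Injective (f i)) {U : (i : ι) → (∀ j, T j) → ℝ}
    {σ : ∀ i, S i → ℝ} :
    IsNashEq U (extendProfile f σ) ↔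
      IsNashEq (restrictUtility f U) σ ∧
        ∀ i, ∀ t ∉ Set.range (f i),
          EU U (pureDeviation (extendProfile f σ) i t) i ≤ EU U (extendProfile f σ) i := by
  have hdist : (∀ i, IsDist (extendProfile f σ i)) ↔ ∀ i, IsDist (σ i) :=
    forall_congr' fun i => isDist_extend_iff (hf i)
  have hdev (i : ι) (a : S i) : EU U (pureDeviation (extendProfile f σ) i (f i a)) i
      = EU (restrictUtility f U) (pureDeviation σ i a) i := by
    rw [pureDeviation_extendProfile hf, EU_extendProfile hf]
  simp only [isNashEq_iff_pureDeviation, hdist, and_assoc, EU_extendProfile hf U σ]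
  refine and_congr_right fun _ => ⟨fun h => ⟨fun i a => hdev i a ▸ h i (f i a), fun i t _ => h i t⟩,
    fun ⟨hin, hout⟩ i t => ?_⟩
  by_cases ht : t ∈ Set.range (f i)
  · obtain ⟨a, rfl⟩ := ht
    exact (hdev i a).trans_le (hin i a)
  · exact hout i t ht

end Restriction

section Gadget

open Function

variable {k n m : ℕ} {Shat : Player k → Type}

/-- The inclusion `Σ̂ᵢ ⊆ Σᵢ` of the gadget strategies. -/
def ofGadget : ∀ i, Shat i → Strat Shat n m i
  | .inl _, a => Sum.inl a
  | .inr _, a => Sum.inl a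

lemma toGadget_ofGadget (i : Player k) (a : Shat i) :
    toGadget Shat i (ofGadget (n := n) (m := m) i a) = some a := by
  cases i <;> rfl

lemma ofGadget_injective (i : Player k) :
    Injective (ofGadget (Shat := Shat) (n := n) (m := m) i) := fun a b h =>
  Option.some_injective _ <| by rw [← toGadget_ofGadget (n := n) (m := m), h, toGadget_ofGadget]

lemma isSome_toGadget_iff {i : Player k} {t : Strat Shat n m i} :
    (toGadget Shat i t).isSome ↔ t ∈ Set.range (ofGadget i) := by
  constructor
  · intro h
    match i, t, h with
    | .inl _, .inl a, _ => exact ⟨a, rfl⟩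
    | .inr _, .inl a, _ => exact ⟨a, rfl⟩
  · rintro ⟨a, rfl⟩
    rw [toGadget_ofGadget, Option.isSome_some]

lemma liftProfile_eq_extendProfile (σh : ∀ i, Shat i → ℝ) :
    liftProfile (n := n) (m := m) Shat σh = extendProfile ofGadget σh := by
  funext i t
  by_cases ht : t ∈ Set.range (ofGadget i)
  · obtain ⟨a, rfl⟩ := ht
    refine Eq.trans ?_ ((ofGadget_injective i).extend_apply _ _ a).symm
    cases i <;> rfl
  · refine Eq.trans ?_ (extend_apply' _ _ _ ht).symm
    rcases i with p | q <;> rcases t with a | b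
    exacts [absurd ⟨a, rfl⟩ ht, rfl, absurd ⟨a, rfl⟩ ht, rfl]

variable [∀ i, Fintype (Shat i)] {Uhat : (i : Player k) → (∀ j, Shat j) → ℝ}
  {Cl : Fin m → Finset (Lit n)}

lemma restrictUtility_BigU (Uhat : (i : Player k) → (∀ j, Shat j) → ℝ)
    (Cl : Fin m → Finset (Lit n)) :
    restrictUtility ofGadget (BigU Shat Uhat Cl) = Uhat := by
  funext i s
  simp only [restrictUtility, BigU, Pi.map_apply, toGadget_ofGadget, Option.isSome_some,
    implies_true, dite_true, Option.get_some]

lemma BigU_eq_zero {i j : Player k} {s : ∀ l, Strat Shat n m l}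
    (hi : s i ∉ Set.range (ofGadget i)) (hj : s j ∈ Set.range (ofGadget j)) :
    BigU Shat Uhat Cl i s = 0 := by
  rw [← isSome_toGadget_iff] at hi hj
  have hcard : 0 < (univ.filter fun l => (toGadget Shat l (s l)).isSome = true).card :=
    card_pos.2 ⟨j, by simp [hj]⟩
  unfold BigU
  rw [dif_neg fun h => hi (h i)]
  split_ifs with htwo hone
  exacts [rfl, rfl, by lia]

lemma BigU_eq_one {i j l : Player k} {s : ∀ l, Strat Shat n m l} (hij : i ≠ j)
    (hi : s i ∈ Set.range (ofGadget i)) (hj : s j ∈ Set.range (ofGadget j))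
    (hl : s l ∉ Set.range (ofGadget l)) :
    BigU Shat Uhat Cl i s = 1 := by
  rw [← isSome_toGadget_iff] at hi hj hl
  have hcard : 1 < (univ.filter fun l => (toGadget Shat l (s l)).isSome = true).card :=
    one_lt_card.2 ⟨i, by simp [hi], j, by simp [hj], hij⟩
  unfold BigU
  rw [dif_neg fun h => hl (h l), if_pos hcard, if_pos hi]

lemma pairU_nonneg (Cl : Fin m → Finset (Lit n)) (a b : SpecialAux n m) : 0 ≤ pairU Cl a b := by
  rcases a with a | a | a <;> rcases b with b | b | b <;> simp only [pairU] <;>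
    (try split_ifs) <;> simp [Prod.le_def]

lemma BigU_nonneg (hU : ∀ i s, 0 ≤ Uhat i s) (i : Player k) (s : ∀ j, Strat Shat n m j) :
    0 ≤ BigU Shat Uhat Cl i s := by
  have hpair (a b : SpecialAux n m) :
      0 ≤ (pairU Cl a b).1 ∧ 0 ≤ (pairU Cl a b).2.1 ∧ 0 ≤ (pairU Cl a b).2.2 :=
    pairU_nonneg Cl a b
  unfold BigU
  repeat' split
  all_goals first
    | exact hU _ _
    | exact zero_le_one
    | exact le_rfl
    | exact (hpair _ _).1
    | exact (hpair _ _).2.1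
    | exact (hpair _ _).2.2

lemma EU_BigU_pureDeviation_eq_zero {σ : ∀ i, Strat Shat n m i → ℝ} {i j : Player k}
    (hji : j ≠ i) (hj : support (σ j) ⊆ Set.range (ofGadget j)) {t : Strat Shat n m i}
    (ht : t ∉ Set.range (ofGadget i)) :
    EU (BigU Shat Uhat Cl) (pureDeviation σ i t) i = 0 :=
  EU_pureDeviation_eq_zero fun _ hsi hs => BigU_eq_zero (hsi ▸ ht) (hj (hs j hji))

lemma exists_BigU_update_pos {i j : Player k} [Nonempty (Shat j)]
    (hPUP : ∀ s : ∀ l, Shat l, ∃ t, 0 < Uhat j (update s j t)) (hij : i ≠ j)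
    {s : ∀ l, Strat Shat n m l} (hi : s i ∈ Set.range (ofGadget i)) :
    ∃ t, 0 < BigU Shat Uhat Cl j (update s j t) := by
  obtain ⟨a₀⟩ := ‹Nonempty (Shat j)›
  set s' := update s j (ofGadget j a₀) with hs'
  by_cases hall : ∀ l, s' l ∈ Set.range (ofGadget l)
  · choose sh hsh using hall
    obtain ⟨a, ha⟩ := hPUP sh
    refine ⟨ofGadget j a, ?_⟩
    have hmap : update s j (ofGadget j a) = Pi.map ofGadget (update sh j a) := by
      rw [Pi.map_update, show Pi.map ofGadget sh = s' from funext hsh, hs', update_idem]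
    rw [hmap]
    rwa [← restrictUtility_BigU Uhat Cl] at ha
  · obtain ⟨l, hl⟩ := not_forall.1 hall
    have hi' : s' i ∈ Set.range (ofGadget i) := by rwa [hs', update_of_ne hij]
    have hj' : s' j ∈ Set.range (ofGadget j) := by
      rw [hs', update_self]
      exact Set.mem_range_self a₀
    exact ⟨ofGadget j a₀, (BigU_eq_one hij.symm hj' hi' hl).symm ▸ one_pos⟩

theorem isNashEq_liftProfile (hU : ∀ i s, 0 ≤ Uhat i s) {σh : ∀ i, Shat i → ℝ}
    (hσh : IsNashEq Uhat σh) : IsNashEq (BigU Shat Uhat Cl) (liftProfile Shat σh) := by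
  rw [liftProfile_eq_extendProfile, isNashEq_extendProfile_iff ofGadget_injective,
    restrictUtility_BigU]
  refine ⟨hσh, fun i t ht => ?_⟩
  have : Nontrivial (Player k) := Sum.inl_injective.nontrivial
  obtain ⟨j, hji⟩ := exists_ne i
  calc EU (BigU Shat Uhat Cl) (pureDeviation (extendProfile ofGadget σh) i t) i
      = 0 := EU_BigU_pureDeviation_eq_zero hji
          (support_extendProfile_subset ofGadget_injective σh j) ht
    _ ≤ EU Uhat σh i := EU_nonneg (fun j => (hσh.1 j).1) (hU i)
    _ = EU (BigU Shat Uhat Cl) (extendProfile ofGadget σh) i := by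
        rw [EU_extendProfile ofGadget_injective, restrictUtility_BigU]

theorem IsNashEq.support_subset_range_ofGadget [∀ i, Nonempty (Shat i)]
    (hU : ∀ i s, 0 ≤ Uhat i s)
    (hPUP : ∀ (i : Player k) (s : ∀ j, Shat j), ∃ t, 0 < Uhat i (update s i t))
    {σ : ∀ i, Strat Shat n m i → ℝ} (hσ : IsNashEq (BigU Shat Uhat Cl) σ) {i : Player k}
    (hi : support (σ i) ⊆ Set.range (ofGadget i)) (j : Player k) :
    support (σ j) ⊆ Set.range (ofGadget j) := by
  obtain rfl | hij := eq_or_ne i j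
  · exact hi
  intro t ht
  by_contra htg
  have hzero : EU (BigU Shat Uhat Cl) σ j = 0 :=
    (hσ.EU_pureDeviation_eq ht).symm.trans (EU_BigU_pureDeviation_eq_zero hij hi htg)
  choose s hs using fun l => (hσ.1 l).exists_pos
  obtain ⟨u, hu⟩ := exists_BigU_update_pos (Cl := Cl) (hPUP j) hij (hi (hs i).ne')
  have hpos : 0 < EU (BigU Shat Uhat Cl) (pureDeviation σ j u) j :=
    EU_pureDeviation_pos (fun l => (hσ.1 l).1) (BigU_nonneg hU j) (fun l _ => hs l) hu
  exact (hpos.trans_le ((isNashEq_iff_pureDeviation.1 hσ).2 j u)).ne' hzero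

end Gadget

theorem reduction_gadget_equilibria_general
    {k n m : ℕ}
    (Shat : Player k → Type) [∀ i, Fintype (Shat i)] [∀ i, Nonempty (Shat i)]
    (Uhat : (i : Player k) → (∀ j, Shat j) → ℝ)
    (hU : ∀ i s, 0 ≤ Uhat i s)
    (hPUP : ∀ (i : Player k) (s : ∀ j, Shat j), ∃ t, 0 < Uhat i (Function.update s i t))
    (Cl : Fin m → Finset (Lit n)) :
    (∀ σh : ∀ i, Shat i → ℝ, IsNashEq Uhat σh →
      IsNashEq (BigU Shat Uhat Cl) (liftProfile Shat σh)) ∧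
    (∀ σ : ∀ i, Strat Shat n m i → ℝ, IsNashEq (BigU Shat Uhat Cl) σ →
      (∃ i, ∀ t, 0 < σ i t → (toGadget Shat i t).isSome = true) →
      ∃ σh : ∀ i, Shat i → ℝ, IsNashEq Uhat σh ∧ σ = liftProfile Shat σh) := by
  refine ⟨fun σh hσh => isNashEq_liftProfile hU hσh, fun σ hσ ⟨i, hi⟩ => ?_⟩
  have hsupp : Function.support (σ i) ⊆ Set.range (ofGadget i) := fun t ht =>
    isSome_toGadget_iff.1 (hi t (((hσ.1 i).1 t).lt_of_ne' ht))
  have hext : extendProfile ofGadget (fun j => σ j ∘ ofGadget j) = σ :=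
    extendProfile_comp ofGadget_injective (hσ.support_subset_range_ofGadget hU hPUP hsupp)
  rw [← hext, isNashEq_extendProfile_iff ofGadget_injective, restrictUtility_BigU] at hσ
  exact ⟨_, hσ.1, hext.symm.trans (liftProfile_eq_extendProfile _).symm⟩

/-- Lemma "f is PNE": for the win-lose game `G = G(Ĝ, φ)` built from an `r`-player
win-lose gadget game `Ĝ` with the positive utility property and a 3SAT formula `φ`
with `n ≥ 4` variables:
(C.1) every Nash equilibrium of `Ĝ`, regarded as a mixed profile of `G`, is a Nash
equilibrium of `G`; and
(C.2) there is no Nash equilibrium of `G` outside `NE(Ĝ)` in which some player's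
support is contained in her gadget strategies. -/
theorem reduction_gadget_equilibria
    {k n m : ℕ} (hn : 4 ≤ n)
    (Shat : Player k → Type) [∀ i, Fintype (Shat i)] [∀ i, Nonempty (Shat i)]
    (Uhat : (i : Player k) → (∀ j, Shat j) → ℝ)
    (hWL : ∀ i s, Uhat i s = 0 ∨ Uhat i s = 1)
    (hPUP : ∀ (i : Player k) (s : ∀ j, Shat j), ∃ t, 0 < Uhat i (Function.update s i t))
    (Cl : Fin m → Finset (Lit n)) (h3 : ∀ c, (Cl c).card = 3) :
    (∀ σh : ∀ i, Shat i → ℝ, IsNashEq Uhat σh →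
      IsNashEq (BigU Shat Uhat Cl) (liftProfile Shat σh)) ∧
    (∀ σ : ∀ i, Strat Shat n m i → ℝ, IsNashEq (BigU Shat Uhat Cl) σ →
      (∃ i, ∀ t, 0 < σ i t → (toGadget Shat i t).isSome = true) →
      ∃ σh : ∀ i, Shat i → ℝ, IsNashEq Uhat σh ∧ σ = liftProfile Shat σh) :=
  reduction_gadget_equilibria_general Shat Uhat
    (fun i s => by rcases hWL i s with h | h <;> simp [h]) hPUP Cl
end
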